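/- Robust stability of rCLBF-based control (stability part of Theorem 2): Let the dynamics be affine in the parameter θ as in the parametric model with scenarios θ₀, …, θ_m ∈ EuclideanSpace ℝ (Fin r). Let V : E → ℝ be differentiable, x_goal ∈ E with V x_goal = 0 and V y > 0 for all y ≠ x_goal, and λ > 0. Suppose the policy π : E → U satisfies, for every y ∈ E and every i ∈ Fin (m+1), (fderiv ℝ V y) (f_{θ_i} y + g_{θ_i} y (π y)) + λ * V y ≤ 0. Then for every θ in the convex hull of {θ₀, …, θ_m} and every trajectory x : ℝ → E with HasDerivAt x (f_θ (x t) + g_θ (x t) (π (x t))) t for all t ≥ 0: (i) V (x t) ≤ V (x 0) * Real.exp (-λ * t) for all t ≥ 0, and (ii) if moreover x t remains in a compact set K ⊆ E for all t ≥ 0, then x t → x_goal as t → ∞. -/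

import Mathlib

open Filter

/-!
At a fixed state, the rate of change of `V` along the closed loop is an affine function of the
parameter, so the decrease condition passes from the scenarios to their convex hull. Grönwall's
inequality turns it into exponential decay of `V` along a trajectory, and therefore `V ≤ 0` at every
cluster point. Only the goal state satisfies this, and inside a compact set a unique possible
cluster point is a limit.
-/

open Set Topology

theorem affineMap_le_of_mem_convexHull {𝕜 P β : Type*} [Ring 𝕜] [PartialOrder 𝕜]
    [AddCommGroup P] [Module 𝕜 P] [AddCommGroup β] [PartialOrder β]
    [IsOrderedAddMonoid β] [Module 𝕜 β] [PosSMulMono 𝕜 β] (A : P →ᵃ[𝕜] β) {S : Set P} {c : β}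
    (hS : ∀ p ∈ S, A p ≤ c) {p : P} (hp : p ∈ convexHull 𝕜 S) : A p ≤ c :=
  convexHull_min hS ((convex_Iic c).affine_preimage A) hp

theorem le_mul_exp_of_deriv_right_le_mul {u u' : ℝ → ℝ} {k a b : ℝ}
    (hu : ContinuousOn u (Icc a b))
    (hu' : ∀ t ∈ Ico a b, HasDerivWithinAt u (u' t) (Ici t) t)
    (bound : ∀ t ∈ Ico a b, u' t ≤ k * u t) :
    ∀ t ∈ Icc a b, u t ≤ u a * Real.exp (k * (t - a)) := by
  intro t ht
  rw [← gronwallBound_ε0]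
  exact le_gronwallBound_of_liminf_deriv_right_le hu
    (fun s hs _ hr => (hu' s hs).liminf_right_slope_le hr) le_rfl
    (fun s hs => by simpa only [add_zero] using bound s hs) t ht

theorem tendsto_mul_exp_neg_mul_atTop_nhds_zero (c : ℝ) {lam : ℝ} (hlam : 0 < lam) :
    Tendsto (fun t => c * Real.exp (-lam * t)) atTop (𝓝 0) := by
  have hexponent : Tendsto (fun t => -lam * t) atTop atBot :=
    tendsto_id.const_mul_atTop_of_neg (neg_lt_zero.2 hlam)
  simpa only [mul_zero, Function.comp_apply] using
    (Real.tendsto_exp_atBot.comp hexponent).const_mul c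

theorem tendsto_nhds_of_isCompact_of_lowerSemicontinuousOn {α X β : Type*} [TopologicalSpace X]
    [LinearOrder β] [DenselyOrdered β] {l : Filter α} {x : α → X} {K : Set X} {x₀ : X} {V : X → β}
    {c : β} (hK : IsCompact K) (hxK : ∀ᶠ t in l, x t ∈ K) (hV : LowerSemicontinuousOn V K)
    (hc : ∀ y ∈ K, y ≠ x₀ → c < V y) (hVx : ∀ b > c, ∀ᶠ t in l, V (x t) ≤ b) :
    Tendsto x l (𝓝 x₀) := by
  refine hK.tendsto_nhds_of_unique_mapClusterPt hxK fun y hyK hy => ?_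
  by_contra hne
  obtain ⟨b, hcb, hby⟩ := exists_between (hc y hyK hne)
  have hnear : ∀ᶠ z in 𝓝 y, z ∈ K → b < V z := eventually_nhdsWithin_iff.1 (hV y hyK b hby)
  obtain ⟨t, hlt, htK, hle⟩ := ((hy.frequently hnear).and_eventually (hxK.and (hVx b hcb))).exists
  exact hle.not_gt (hlt htK)

theorem tendsto_nhds_of_lyapunov_le_mul_exp {X : Type*} [TopologicalSpace X] {V : X → ℝ}
    {x : ℝ → X} {x_goal : X} {K : Set X} {c lam : ℝ} (hV : LowerSemicontinuousOn V K)
    (hVpos : ∀ y ∈ K, y ≠ x_goal → 0 < V y) (hlam : 0 < lam)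
    (hdecay : ∀ t ≥ 0, V (x t) ≤ c * Real.exp (-lam * t)) (hK : IsCompact K)
    (hxK : ∀ t ≥ 0, x t ∈ K) : Tendsto x atTop (𝓝 x_goal) := by
  refine tendsto_nhds_of_isCompact_of_lowerSemicontinuousOn hK
    ((eventually_ge_atTop 0).mono hxK) hV hVpos fun b hb => ?_
  filter_upwards [eventually_ge_atTop 0,
    (tendsto_mul_exp_neg_mul_atTop_nhds_zero c hlam).eventually_le_const hb] with t ht hle
  exact (hdecay t ht).trans hle

section Lyapunov

variable {E : Type*} [NormedAddCommGroup E] [NormedSpace ℝ E] {V : E → ℝ} {lam : ℝ} {x : ℝ → E}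

theorem lyapunov_le_mul_exp (hV : Differentiable ℝ V) {x' : ℝ → E}
    (hx : ContinuousOn x (Ici 0)) (hx' : ∀ t ≥ 0, HasDerivWithinAt x (x' t) (Ici t) t)
    (hdec : ∀ t ≥ 0, fderiv ℝ V (x t) (x' t) + lam * V (x t) ≤ 0) :
    ∀ t ≥ 0, V (x t) ≤ V (x 0) * Real.exp (-lam * t) := by
  intro t ht
  have hVx' : ∀ s ∈ Ico 0 t,
      HasDerivWithinAt (fun s => V (x s)) (fderiv ℝ V (x s) (x' s)) (Ici s) s := fun s hs =>
    (hV (x s)).hasFDerivAt.comp_hasDerivWithinAt s (hx' s hs.1)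
  have hVx : ContinuousOn (fun s => V (x s)) (Icc 0 t) :=
    hV.continuous.comp_continuousOn (hx.mono Icc_subset_Ici_self)
  have hrate : ∀ s ∈ Ico 0 t, fderiv ℝ V (x s) (x' s) ≤ -lam * V (x s) := fun s hs => by
    linarith [hdec s hs.1]
  simpa only [sub_zero] using le_mul_exp_of_deriv_right_le_mul hVx hVx' hrate t ⟨ht, le_rfl⟩

/-- Right derivatives are the natural ones here, since `θ` may jump along the trajectory. -/
theorem rclbf_robust_stability_general {P : Type*} [AddCommGroup P] [Module ℝ P]
    (F : E → P →ᵃ[ℝ] E) {S : Set P} (hV : Differentiable ℝ V) {x_goal : E}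
    (hVpos : ∀ y, y ≠ x_goal → 0 < V y) (hlam : 0 < lam)
    (hdec : ∀ y, ∀ p ∈ S, fderiv ℝ V y (F y p) + lam * V y ≤ 0)
    {θ : ℝ → P} (hθ : ∀ t ≥ 0, θ t ∈ convexHull ℝ S) (hx : ContinuousOn x (Ici 0))
    (hx' : ∀ t ≥ 0, HasDerivWithinAt x (F (x t) (θ t)) (Ici t) t) :
    (∀ t ≥ 0, V (x t) ≤ V (x 0) * Real.exp (-lam * t)) ∧
      ∀ K : Set E, IsCompact K → (∀ t ≥ 0, x t ∈ K) → Tendsto x atTop (𝓝 x_goal) := by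
  have hdec_hull : ∀ t ≥ 0, fderiv ℝ V (x t) (F (x t) (θ t)) + lam * V (x t) ≤ 0 := fun t ht =>
    affineMap_le_of_mem_convexHull
      ((fderiv ℝ V (x t)).toLinearMap.toAffineMap.comp (F (x t)) +
        AffineMap.const ℝ P (lam * V (x t))) (hdec (x t)) (hθ t ht)
  have hdecay := lyapunov_le_mul_exp hV hx hx' hdec_hull
  exact ⟨hdecay, fun K => tendsto_nhds_of_lyapunov_le_mul_exp
    (hV.continuous.lowerSemicontinuous.lowerSemicontinuousOn K) (fun y _ => hVpos y) hlam hdecay⟩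

end Lyapunov

/-- The closed-loop velocity `f_θ y + g_θ y (π y)` at the state `y`, as an affine map of the
parameter `θ`. -/
noncomputable def closedLoopVelocity {ι E U : Type*} [Fintype ι] [NormedAddCommGroup E]
    [NormedSpace ℝ E] [NormedAddCommGroup U] [NormedSpace ℝ U] (f₀ : E → E) (fP : ι → E → E)
    (g₀ : E → U →L[ℝ] E) (gP : ι → E → U →L[ℝ] E) (π : E → U) (y : E) :
    EuclideanSpace ℝ ι →ᵃ[ℝ] E where
  toFun θ := (f₀ y + ∑ j, θ j • fP j y) + (g₀ y + ∑ j, θ j • gP j y) (π y)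
  linear := ∑ j, (EuclideanSpace.projₗ j).smulRight (fP j y + gP j y (π y))
  map_vadd' θ η := by
    simp only [vadd_eq_add, PiLp.add_apply, add_smul, Finset.sum_add_distrib, add_apply,
      sum_apply, smul_apply, LinearMap.coe_sum, LinearMap.coe_smulRight, PiLp.projₗ_apply, smul_add,
      Finset.sum_apply]
    abel

theorem rclbf_robust_stability {n ℓ r m : ℕ}
    (f₀ : EuclideanSpace ℝ (Fin n) → EuclideanSpace ℝ (Fin n))
    (fP : Fin r → EuclideanSpace ℝ (Fin n) → EuclideanSpace ℝ (Fin n))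
    (g₀ : EuclideanSpace ℝ (Fin n) →
      (EuclideanSpace ℝ (Fin ℓ) →L[ℝ] EuclideanSpace ℝ (Fin n)))
    (gP : Fin r → EuclideanSpace ℝ (Fin n) →
      (EuclideanSpace ℝ (Fin ℓ) →L[ℝ] EuclideanSpace ℝ (Fin n)))
    (θs : Fin (m + 1) → EuclideanSpace ℝ (Fin r))
    (V : EuclideanSpace ℝ (Fin n) → ℝ) (hV : Differentiable ℝ V)
    (x_goal : EuclideanSpace ℝ (Fin n))
    (hVgoal : V x_goal = 0)
    (hVpos : ∀ y, y ≠ x_goal → 0 < V y)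
    (lam : ℝ) (hlam : 0 < lam)
    (π : EuclideanSpace ℝ (Fin n) → EuclideanSpace ℝ (Fin ℓ))
    (hdec : ∀ y, ∀ i : Fin (m + 1),
      (fderiv ℝ V y) ((f₀ y + ∑ j, θs i j • fP j y) +
        (g₀ y + ∑ j, θs i j • gP j y) (π y)) + lam * V y ≤ 0) :
    ∀ θ ∈ convexHull ℝ (Set.range θs),
      ∀ x : ℝ → EuclideanSpace ℝ (Fin n),
        (∀ t ≥ (0 : ℝ), HasDerivAt x ((f₀ (x t) + ∑ j, θ j • fP j (x t)) +
          (g₀ (x t) + ∑ j, θ j • gP j (x t)) (π (x t))) t) →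
        (∀ t ≥ (0 : ℝ), V (x t) ≤ V (x 0) * Real.exp (-lam * t)) ∧
        (∀ K : Set (EuclideanSpace ℝ (Fin n)), IsCompact K →
          (∀ t ≥ (0 : ℝ), x t ∈ K) → Tendsto x atTop (nhds x_goal)) := by
  intro θ hθ x hx
  exact rclbf_robust_stability_general (closedLoopVelocity f₀ fP g₀ gP π) hV hVpos hlam
    (fun y => forall_mem_range.2 (hdec y)) (fun _ _ => hθ) (HasDerivAt.continuousOn hx)
    fun t ht => (hx t ht).hasDerivWithinAt
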